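/- arXiv:2009.01296 — 9 statements merged into one kernel-verified Lean document; each statement's English description precedes it below -/
import Mathlib

section
/- Let λ1>0, λ2≥0, λ3≥0 and let f be the joint mass function of the bivariate Pseudo-Poisson distribution. Then for all real t1, t2, the joint probability generating function satisfies ∑_{x1=0}^∞ ∑_{x2=0}^∞ t1^{x1} t2^{x2} f(x1,x2) = exp(λ2(t2−1)) · exp(λ1(t1·exp(λ3(t2−1)) − 1)). -/
/-!
Given `x1`, the inner sum over `x2` is an exponential series: it is the generating function
`exp ((λ2 + λ3 x1) (t2 - 1))` of the conditional Poisson law, times a factor depending on `x1`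
only. Since `exp (λ3 x1 (t2 - 1)) = exp (λ3 (t2 - 1)) ^ x1`, the outer sum is again an
exponential series, at `λ1 t1 exp (λ3 (t2 - 1))`.
-/

/-- The joint mass function of the bivariate Pseudo-Poisson distribution
with parameters `λ1, λ2, λ3` (with linear regression). -/
noncomputable def pseudoPoissonPMF (l1 l2 l3 : ℝ) (x1 x2 : ℕ) : ℝ :=
  (Real.exp (-l1) * l1 ^ x1 / (Nat.factorial x1)) *
    (Real.exp (-(l2 + l3 * x1)) * (l2 + l3 * x1) ^ x2 / (Nat.factorial x2))

theorem hasSum_pow_div_factorial (x : ℝ) :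
    HasSum (fun n : ℕ => x ^ n / (Nat.factorial n : ℝ)) (Real.exp x) := by
  rw [Real.exp_eq_exp_ℝ]
  exact NormedSpace.expSeries_div_hasSum_exp x

/-- The joint probability generating function of the bivariate Pseudo-Poisson
distribution is `G(t1,t2) = exp(λ2(t2−1)) · exp(λ1(t1·exp(λ3(t2−1)) − 1))`. -/
theorem pseudoPoisson_pgf (l1 l2 l3 : ℝ) (h1 : 0 < l1) (h2 : 0 ≤ l2) (h3 : 0 ≤ l3)
    (t1 t2 : ℝ) :
    ∑' x1 : ℕ, ∑' x2 : ℕ, t1 ^ x1 * t2 ^ x2 * pseudoPoissonPMF l1 l2 l3 x1 x2 =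
      Real.exp (l2 * (t2 - 1)) * Real.exp (l1 * (t1 * Real.exp (l3 * (t2 - 1)) - 1)) := by
  have inner : ∀ x1 : ℕ,
      ∑' x2 : ℕ, t1 ^ x1 * t2 ^ x2 * pseudoPoissonPMF l1 l2 l3 x1 x2 =
        Real.exp (-l1) * Real.exp (l2 * (t2 - 1)) *
          ((l1 * t1 * Real.exp (l3 * (t2 - 1))) ^ x1 / (Nat.factorial x1 : ℝ)) := by
    intro x1
    have hs := (hasSum_pow_div_factorial (t2 * (l2 + l3 * x1))).mul_left
      (t1 ^ x1 * (Real.exp (-l1) * l1 ^ x1 / (Nat.factorial x1 : ℝ)) *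
        Real.exp (-(l2 + l3 * x1)))
    have hexp : Real.exp (-(l2 + l3 * x1)) * Real.exp (t2 * (l2 + l3 * x1)) =
        Real.exp (l2 * (t2 - 1)) * Real.exp (l3 * (t2 - 1)) ^ x1 := by
      rw [← Real.exp_nat_mul, ← Real.exp_add, ← Real.exp_add]
      congr 1
      ring
    calc ∑' x2 : ℕ, t1 ^ x1 * t2 ^ x2 * pseudoPoissonPMF l1 l2 l3 x1 x2
        = t1 ^ x1 * (Real.exp (-l1) * l1 ^ x1 / (Nat.factorial x1 : ℝ)) *
            Real.exp (-(l2 + l3 * x1)) * Real.exp (t2 * (l2 + l3 * x1)) := by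
          rw [← hs.tsum_eq]
          refine tsum_congr fun x2 => ?_
          rw [pseudoPoissonPMF, mul_pow t2]
          ring
      _ = _ := by
          rw [mul_assoc _ (Real.exp (-(l2 + l3 * x1))), hexp, mul_pow, mul_pow]
          ring
  rw [tsum_congr inner,
    ((hasSum_pow_div_factorial (l1 * t1 * Real.exp (l3 * (t2 - 1)))).mul_left _).tsum_eq,
    mul_comm (Real.exp (-l1)), mul_assoc, ← Real.exp_add]
  congr 2
  ring
end

section
/- Let λ1>0, λ2≥0, λ3≥0 and let f be the joint mass function of the bivariate Pseudo-Poisson distribution. Then for all real t2, the probability generating function of the second marginal satisfies ∑_{x2=0}^∞ t2^{x2} (∑_{x1=0}^∞ f(x1,x2)) = exp(λ2(t2−1)) · exp(λ1(exp(λ3(t2−1)) − 1)); in particular, when λ2=0 this equals exp(λ1(exp(λ3(t2−1)) − 1)), the probability generating function of a Neyman Type A distribution with parameters λ1 and λ3. -/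
/-- The inner sum: the conditional p.g.f. of `X2` given `X1 = x1`, weighted by `P(X1 = x1)`. -/
lemma hasSum_pseudoPoissonPMF_snd (l1 l2 l3 t : ℝ) (x1 : ℕ) :
    HasSum (fun x2 : ℕ => t ^ x2 * pseudoPoissonPMF l1 l2 l3 x1 x2)
      (Real.exp (-l1) * l1 ^ x1 / (Nat.factorial x1) *
        Real.exp ((l2 + l3 * x1) * (t - 1))) := by
  have h := NormedSpace.expSeries_div_hasSum_exp (𝔸 := ℝ) (t * (l2 + l3 * x1))
  rw [← Real.exp_eq_exp_ℝ] at h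
  have h' := h.mul_left
    (Real.exp (-l1) * l1 ^ x1 / (Nat.factorial x1) * Real.exp (-(l2 + l3 * x1)))
  convert h' using 1
  · rfl
  · funext x2
    rw [pseudoPoissonPMF, mul_pow]
    ring
  · rw [mul_assoc _ (Real.exp (-(l2 + l3 * x1))), ← Real.exp_add]
    ring_nf

/-- The outer sum of the conditional p.g.f.s over the Poisson variable `X1`. -/
lemma hasSum_pseudoPoisson_outer (l1 l2 l3 t : ℝ) :
    HasSum (fun x1 : ℕ => Real.exp (-l1) * l1 ^ x1 / (Nat.factorial x1) *
        Real.exp ((l2 + l3 * x1) * (t - 1)))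
      (Real.exp (l2 * (t - 1)) * Real.exp (l1 * (Real.exp (l3 * (t - 1)) - 1))) := by
  have h := NormedSpace.expSeries_div_hasSum_exp (𝔸 := ℝ) (l1 * Real.exp (l3 * (t - 1)))
  rw [← Real.exp_eq_exp_ℝ] at h
  have h' := h.mul_left (Real.exp (-l1) * Real.exp (l2 * (t - 1)))
  convert h' using 1
  · rfl
  · funext x1
    have : (l2 + l3 * x1) * (t - 1) = l2 * (t - 1) + x1 * (l3 * (t - 1)) := by ring
    rw [this, Real.exp_add, Real.exp_nat_mul, mul_pow]
    ring
  · rw [← Real.exp_add, ← Real.exp_add, ← Real.exp_add]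
    ring_nf

lemma pseudoPoissonPMF_nonneg {l1 l2 l3 : ℝ} (h1 : 0 ≤ l1) (h2 : 0 ≤ l2) (h3 : 0 ≤ l3)
    (x1 x2 : ℕ) : 0 ≤ pseudoPoissonPMF l1 l2 l3 x1 x2 := by
  unfold pseudoPoissonPMF
  positivity

/-- Absolute convergence of the double series, by reduction to the series at `|t|`. -/
lemma summable_pseudoPoisson {l1 l2 l3 : ℝ} (h1 : 0 ≤ l1) (h2 : 0 ≤ l2) (h3 : 0 ≤ l3) (t : ℝ) :
    Summable (fun p : ℕ × ℕ => t ^ p.2 * pseudoPoissonPMF l1 l2 l3 p.1 p.2) := by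
  apply Summable.of_norm
  have habs : (fun p : ℕ × ℕ => ‖t ^ p.2 * pseudoPoissonPMF l1 l2 l3 p.1 p.2‖) =
      fun p : ℕ × ℕ => |t| ^ p.2 * pseudoPoissonPMF l1 l2 l3 p.1 p.2 := by
    funext p
    rw [Real.norm_eq_abs, abs_mul, abs_pow, abs_of_nonneg (pseudoPoissonPMF_nonneg h1 h2 h3 _ _)]
  rw [habs, summable_prod_of_nonneg
    (fun p => mul_nonneg (by positivity) (pseudoPoissonPMF_nonneg h1 h2 h3 _ _))]
  refine ⟨fun x1 => (hasSum_pseudoPoissonPMF_snd l1 l2 l3 |t| x1).summable, ?_⟩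
  simp only [(hasSum_pseudoPoissonPMF_snd l1 l2 l3 |t| _).tsum_eq]
  exact (hasSum_pseudoPoisson_outer l1 l2 l3 |t|).summable

/-- The probability generating function of the second marginal of the bivariate
Pseudo-Poisson distribution is `exp(λ2(t2−1)) · exp(λ1(exp(λ3(t2−1)) − 1))`;
when `λ2 = 0` this is the p.g.f. of a Neyman Type A distribution with
parameters `λ1` and `λ3`. -/
theorem pseudoPoisson_marginal_pgf (l1 l2 l3 : ℝ) (h1 : 0 < l1) (h2 : 0 ≤ l2) (h3 : 0 ≤ l3)
    (t2 : ℝ) :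
    (∑' x2 : ℕ, t2 ^ x2 * ∑' x1 : ℕ, pseudoPoissonPMF l1 l2 l3 x1 x2) =
      Real.exp (l2 * (t2 - 1)) * Real.exp (l1 * (Real.exp (l3 * (t2 - 1)) - 1)) ∧
    (l2 = 0 →
      (∑' x2 : ℕ, t2 ^ x2 * ∑' x1 : ℕ, pseudoPoissonPMF l1 l2 l3 x1 x2) =
        Real.exp (l1 * (Real.exp (l3 * (t2 - 1)) - 1))) := by
  have key : (∑' x2 : ℕ, t2 ^ x2 * ∑' x1 : ℕ, pseudoPoissonPMF l1 l2 l3 x1 x2) =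
      Real.exp (l2 * (t2 - 1)) * Real.exp (l1 * (Real.exp (l3 * (t2 - 1)) - 1)) := by
    simp only [← tsum_mul_left]
    rw [← (hasSum_pseudoPoisson_outer l1 l2 l3 t2).tsum_eq]
    simp only [← (hasSum_pseudoPoissonPMF_snd l1 l2 l3 t2 _).tsum_eq]
    exact Summable.tsum_comm (f := fun x1 x2 : ℕ => t2 ^ x2 * pseudoPoissonPMF l1 l2 l3 x1 x2)
      (summable_pseudoPoisson h1.le h2 h3 t2)
  refine ⟨key, ?_⟩
  rintro rfl
  simpa using key
end

section
/- Let λ1>0, λ2≥0, λ3≥0 and let f be the joint mass function of the bivariate Pseudo-Poisson distribution. Then the mean of the second coordinate satisfies ∑_{x1=0}^∞ ∑_{x2=0}^∞ x2 · f(x1,x2) = λ2 + λ3·λ1. -/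
theorem hasSum_poisson_weight (r : ℝ) :
    HasSum (fun n : ℕ => Real.exp (-r) * r ^ n / (Nat.factorial n)) 1 := by
  have h := (NormedSpace.expSeries_div_hasSum_exp (𝔸 := ℝ) r).mul_left (Real.exp (-r))
  rw [← Real.exp_eq_exp_ℝ, ← Real.exp_add, neg_add_cancel, Real.exp_zero] at h
  simpa only [mul_div_assoc] using h

theorem hasSum_poisson_mean (r : ℝ) :
    HasSum (fun n : ℕ => (n : ℝ) * (Real.exp (-r) * r ^ n / (Nat.factorial n))) r := by
  rw [← hasSum_nat_add_iff' 1]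
  have h := (hasSum_poisson_weight r).mul_left r
  simp only [Finset.sum_range_one, Nat.cast_zero, zero_mul, sub_zero]
  rw [mul_one] at h
  refine Eq.subst (motive := fun f : ℕ → ℝ => HasSum f r) (funext fun n => ?_) h
  have hn : (Nat.factorial n : ℝ) ≠ 0 := by positivity
  rw [Nat.factorial_succ]
  push_cast
  field_simp
  ring

/-- The mean of the second coordinate of the bivariate Pseudo-Poisson
distribution is `E(X2) = λ2 + λ3·λ1`. -/
theorem pseudoPoisson_mean_snd (l1 l2 l3 : ℝ) (h1 : 0 < l1) (h2 : 0 ≤ l2) (h3 : 0 ≤ l3) :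
    ∑' x1 : ℕ, ∑' x2 : ℕ, (x2 : ℝ) * pseudoPoissonPMF l1 l2 l3 x1 x2 = l2 + l3 * l1 := by
  have hinner : ∀ x1 : ℕ, ∑' x2 : ℕ, (x2 : ℝ) * pseudoPoissonPMF l1 l2 l3 x1 x2 =
      l2 * (Real.exp (-l1) * l1 ^ x1 / (Nat.factorial x1)) +
        l3 * ((x1 : ℝ) * (Real.exp (-l1) * l1 ^ x1 / (Nat.factorial x1))) := by
    intro x1
    simp only [pseudoPoissonPMF, mul_left_comm (Nat.cast _ : ℝ) (Real.exp (-l1) * _ / _)]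
    rw [((hasSum_poisson_mean (l2 + l3 * x1)).mul_left _).tsum_eq]
    ring
  simp only [hinner]
  rw [(((hasSum_poisson_weight l1).mul_left l2).add
    ((hasSum_poisson_mean l1).mul_left l3)).tsum_eq, mul_one]
end

section
/- Let λ1>0, λ2≥0, λ3≥0 and let f be the joint mass function of the bivariate Pseudo-Poisson distribution. Then the variance of the second coordinate satisfies ∑_{x1=0}^∞ ∑_{x2=0}^∞ x2² · f(x1,x2) − (λ2 + λ3·λ1)² = λ2 + λ3·λ1 + λ3²·λ1. -/
/-- The Poisson weight `e^{-r} r^n / n!`, for an arbitrary real `r`. -/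
noncomputable def poissonWeight (r : ℝ) (n : ℕ) : ℝ :=
  Real.exp (-r) * r ^ n / (Nat.factorial n)

lemma hasSum_poissonWeight (r : ℝ) : HasSum (poissonWeight r) 1 := by
  have h := (NormedSpace.expSeries_div_hasSum_exp (𝔸 := ℝ) r).mul_left (Real.exp (-r))
  rw [← Real.exp_eq_exp_ℝ, ← Real.exp_add, neg_add_cancel, Real.exp_zero] at h
  exact h.congr_fun (fun n => by simp only [poissonWeight]; ring)

/-- The Stein–Chen identity `E[N g(N)] = r E[g(N + 1)]` for `N` Poisson with mean `r`. -/
lemma hasSum_poissonWeight_mul {r s : ℝ} {g : ℕ → ℝ}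
    (h : HasSum (fun n => g (n + 1) * poissonWeight r n) s) :
    HasSum (fun n : ℕ => n * g n * poissonWeight r n) (r * s) := by
  rw [← hasSum_nat_add_iff' 1]
  simp only [Finset.range_one, Finset.sum_singleton, Nat.cast_zero, zero_mul, sub_zero]
  refine (h.mul_left r).congr_fun fun n => ?_
  simp only [poissonWeight, Nat.factorial_succ]
  push_cast
  field_simp
  ring

lemma hasSum_poissonWeight_mean (r : ℝ) :
    HasSum (fun n : ℕ => n * poissonWeight r n) r := by
  have h := hasSum_poissonWeight_mul (r := r) (s := 1) (g := fun _ => 1)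
    (by simpa using hasSum_poissonWeight r)
  simpa using h

lemma hasSum_poissonWeight_sq (r : ℝ) :
    HasSum (fun n : ℕ => (n : ℝ) ^ 2 * poissonWeight r n) (r + r ^ 2) := by
  have h := hasSum_poissonWeight_mul (r := r) (s := r + 1) (g := fun n => (n : ℝ))
    (by simpa [add_mul] using (hasSum_poissonWeight_mean r).add (hasSum_poissonWeight r))
  convert h using 1
  · ext n; ring
  · ring

/-- The variance of the second coordinate of the bivariate Pseudo-Poisson
distribution is `Var(X2) = λ2 + λ3·λ1 + λ3²·λ1` (the mean being `λ2 + λ3·λ1`). -/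
theorem pseudoPoisson_var_snd (l1 l2 l3 : ℝ) (h1 : 0 < l1) (h2 : 0 ≤ l2) (h3 : 0 ≤ l3) :
    (∑' x1 : ℕ, ∑' x2 : ℕ, (x2 : ℝ) ^ 2 * pseudoPoissonPMF l1 l2 l3 x1 x2)
      - (l2 + l3 * l1) ^ 2 = l2 + l3 * l1 + l3 ^ 2 * l1 := by
  have inner (x1 : ℕ) : ∑' x2 : ℕ, (x2 : ℝ) ^ 2 * pseudoPoissonPMF l1 l2 l3 x1 x2 =
      poissonWeight l1 x1 * ((l2 + l3 * x1) + (l2 + l3 * x1) ^ 2) := by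
    rw [← ((hasSum_poissonWeight_sq (l2 + l3 * x1)).mul_left (poissonWeight l1 x1)).tsum_eq]
    refine tsum_congr fun x2 => ?_
    simp only [pseudoPoissonPMF, poissonWeight]
    ring
  have outer : HasSum
      (fun x1 : ℕ => poissonWeight l1 x1 * ((l2 + l3 * x1) + (l2 + l3 * x1) ^ 2))
      ((l2 + l2 ^ 2) * 1 + (l3 + 2 * l2 * l3) * l1 + l3 ^ 2 * (l1 + l1 ^ 2)) := by
    refine ((((hasSum_poissonWeight l1).mul_left (l2 + l2 ^ 2)).add
      ((hasSum_poissonWeight_mean l1).mul_left (l3 + 2 * l2 * l3))).add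
      ((hasSum_poissonWeight_sq l1).mul_left (l3 ^ 2))).congr_fun fun x1 => ?_
    ring
  rw [tsum_congr inner, outer.tsum_eq]
  ring
end

section
/- Let λ1>0, λ2≥0, λ3≥0 and let f be the joint mass function of the bivariate Pseudo-Poisson distribution. Then the correlation coefficient of the two coordinates, i.e. Cov(X1,X2)/√(Var(X1)·Var(X2)) where the moments are defined by the corresponding sums against f, equals λ1·λ3 / √(λ1·(λ2 + λ3·λ1 + λ3²·λ1)). -/
lemma hasSum_of_eq {f g : ℕ → ℝ} {s : ℝ} (h : HasSum f s) (hfg : ∀ n, g n = f n) :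
    HasSum g s :=
  (funext hfg : g = f) ▸ h

/-- The size-bias (Stein–Chen) identity `E[N g(N)] = r E[g(N + 1)]` for `N` Poisson of rate `r`. -/
lemma hasSum_poisson_shift {r s : ℝ} {g : ℕ → ℝ}
    (h : HasSum (fun n : ℕ => g (n + 1) * poissonWeight r n) s) :
    HasSum (fun n : ℕ => n * g n * poissonWeight r n) (r * s) := by
  have h' : HasSum (fun n : ℕ => ((n + 1 : ℕ) : ℝ) * g (n + 1) * poissonWeight r (n + 1))
      (r * s) := by
    refine hasSum_of_eq (h.mul_left r) fun n => ?_
    have hn : (n : ℝ) + 1 ≠ 0 := by positivity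
    have hf : (Nat.factorial n : ℝ) ≠ 0 := by positivity
    simp only [poissonWeight, Nat.factorial_succ, Nat.cast_mul, Nat.cast_succ, pow_succ]
    field_simp
  simpa using (hasSum_nat_add_iff (f := fun n : ℕ => n * g n * poissonWeight r n) 1).mp h'

lemma hasSum_poisson_quadratic (r a b c : ℝ) :
    HasSum (fun n : ℕ => (a + b * n + c * (n : ℝ) ^ 2) * poissonWeight r n)
      (a + b * r + c * (r + r ^ 2)) := by
  have m0 := hasSum_poissonWeight r
  have m1 : HasSum (fun n : ℕ => (n : ℝ) * poissonWeight r n) r := by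
    have h := hasSum_poisson_shift (r := r) (g := fun _ => 1) (by simpa only [one_mul] using m0)
    rw [mul_one] at h
    exact hasSum_of_eq h fun n => by ring
  have m2 : HasSum (fun n : ℕ => (n : ℝ) * n * poissonWeight r n) (r * (r + 1)) := by
    refine hasSum_poisson_shift (g := fun n => (n : ℝ)) ?_
    simpa [add_mul] using m1.add m0
  have h := ((m0.mul_left a).add (m1.mul_left b)).add (m2.mul_left c)
  rw [show a + b * r + c * (r + r ^ 2) = a * 1 + b * r + c * (r * (r + 1)) by ring]
  exact hasSum_of_eq h fun n => by ring

/-- A mean against the joint mass function of a quadratic in `x2`, with coefficients depending on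
`x1`, whose conditional mean given `x1` is the quadratic `A + B x1 + C x1²`. -/
lemma tsum_pseudoPoisson (l1 l2 l3 : ℝ) {F : ℕ → ℕ → ℝ} (a b c : ℕ → ℝ) (A B C : ℝ)
    (hF : ∀ x y : ℕ, F x y = a x + b x * y + c x * (y : ℝ) ^ 2)
    (hA : ∀ x : ℕ, a x + b x * (l2 + l3 * x) + c x * ((l2 + l3 * x) + (l2 + l3 * x) ^ 2)
      = A + B * x + C * (x : ℝ) ^ 2) :
    ∑' x : ℕ, ∑' y : ℕ, F x y * pseudoPoissonPMF l1 l2 l3 x y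
      = A + B * l1 + C * (l1 + l1 ^ 2) := by
  rw [← (hasSum_poisson_quadratic l1 A B C).tsum_eq]
  refine tsum_congr fun x => ?_
  rw [← hA x, mul_comm, ← ((hasSum_poisson_quadratic (l2 + l3 * x) (a x) (b x) (c x)).mul_left
    (poissonWeight l1 x)).tsum_eq]
  refine tsum_congr fun y => ?_
  rw [hF, pseudoPoissonPMF, poissonWeight, poissonWeight]
  ring

/-- The correlation of the two coordinates of the bivariate Pseudo-Poisson
distribution is `ρ = λ1·λ3 / √(λ1·(λ2 + λ3·λ1 + λ3²·λ1))`. -/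
theorem pseudoPoisson_correlation (l1 l2 l3 : ℝ) (h1 : 0 < l1) (h2 : 0 ≤ l2) (h3 : 0 ≤ l3)
    (EX1 EX2 EX1sq EX2sq EX1X2 : ℝ)
    (hEX1 : EX1 = ∑' x1 : ℕ, ∑' x2 : ℕ, (x1 : ℝ) * pseudoPoissonPMF l1 l2 l3 x1 x2)
    (hEX2 : EX2 = ∑' x1 : ℕ, ∑' x2 : ℕ, (x2 : ℝ) * pseudoPoissonPMF l1 l2 l3 x1 x2)
    (hEX1sq : EX1sq = ∑' x1 : ℕ, ∑' x2 : ℕ, (x1 : ℝ) ^ 2 * pseudoPoissonPMF l1 l2 l3 x1 x2)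
    (hEX2sq : EX2sq = ∑' x1 : ℕ, ∑' x2 : ℕ, (x2 : ℝ) ^ 2 * pseudoPoissonPMF l1 l2 l3 x1 x2)
    (hEX1X2 : EX1X2 =
      ∑' x1 : ℕ, ∑' x2 : ℕ, (x1 : ℝ) * (x2 : ℝ) * pseudoPoissonPMF l1 l2 l3 x1 x2) :
    (EX1X2 - EX1 * EX2) / Real.sqrt ((EX1sq - EX1 ^ 2) * (EX2sq - EX2 ^ 2)) =
      l1 * l3 / Real.sqrt (l1 * (l2 + l3 * l1 + l3 ^ 2 * l1)) := by
  rw [tsum_pseudoPoisson l1 l2 l3 (fun x => x) (fun _ => 0) (fun _ => 0) 0 1 0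
    (by intros; ring) (by intros; ring)] at hEX1
  rw [tsum_pseudoPoisson l1 l2 l3 (fun _ => 0) (fun _ => 1) (fun _ => 0) l2 l3 0
    (by intros; ring) (by intros; ring)] at hEX2
  rw [tsum_pseudoPoisson l1 l2 l3 (fun x => (x : ℝ) ^ 2) (fun _ => 0) (fun _ => 0) 0 0 1
    (by intros; ring) (by intros; ring)] at hEX1sq
  rw [tsum_pseudoPoisson l1 l2 l3 (fun _ => 0) (fun _ => 0) (fun _ => 1)
    (l2 + l2 ^ 2) (l3 + 2 * l2 * l3) (l3 ^ 2)
    (by intros; ring) (by intros; ring)] at hEX2sq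
  rw [tsum_pseudoPoisson l1 l2 l3 (fun _ => 0) (fun x => x) (fun _ => 0) 0 l2 l3
    (by intros; ring) (by intros; ring)] at hEX1X2
  have hcov : EX1X2 - EX1 * EX2 = l1 * l3 := by
    rw [hEX1X2, hEX1, hEX2]; ring
  have hvar1 : EX1sq - EX1 ^ 2 = l1 := by
    rw [hEX1sq, hEX1]; ring
  have hvar2 : EX2sq - EX2 ^ 2 = l2 + l3 * l1 + l3 ^ 2 * l1 := by
    rw [hEX2sq, hEX2]; ring
  rw [hcov, hvar1, hvar2]
end

section
/- Let λ1>0 and λ3>0, and let f be the joint mass function of the bivariate Pseudo-Poisson distribution with λ2 = 0 (the Poisson-Poisson distribution). Then the correlation coefficient of the two coordinates, defined as Cov(X1,X2)/√(Var(X1)·Var(X2)) with moments computed as sums against f, equals √(λ3/(1+λ3)); in particular it does not depend on λ1. -/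
/-- The mass at `n` of the Poisson distribution with parameter `r`, for an arbitrary real `r`. -/
noncomputable def poissonMass (r : ℝ) (n : ℕ) : ℝ :=
  Real.exp (-r) * r ^ n / (Nat.factorial n)

theorem hasSum_poissonMass (r : ℝ) : HasSum (poissonMass r) 1 := by
  have h := (NormedSpace.expSeries_div_hasSum_exp r).mul_left (Real.exp (-r))
  rw [← Real.exp_eq_exp_ℝ, ← Real.exp_add, neg_add_cancel, Real.exp_zero] at h
  exact h.congr_fun fun n => mul_div_assoc _ _ _

/-- The Stein–Chen identity `E[X g(X)] = r E[g(X + 1)]` for a Poisson variable `X`: it comes from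
shifting the index and using `(n + 1) p(n + 1) = r p(n)`. -/
theorem hasSum_mul_poissonMass (r : ℝ) (g : ℕ → ℝ) (s : ℝ)
    (h : HasSum (fun n : ℕ => g (n + 1) * poissonMass r n) s) :
    HasSum (fun n : ℕ => (n : ℝ) * g n * poissonMass r n) (r * s) := by
  rw [← hasSum_nat_add_iff' 1]
  simp only [Finset.sum_range_one, Nat.cast_zero, zero_mul, sub_zero]
  refine (h.mul_left r).congr_fun fun n => ?_
  have hn : ((n : ℝ) + 1) ≠ 0 := by positivity
  have hf : (Nat.factorial n : ℝ) ≠ 0 := by positivity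
  simp only [poissonMass, Nat.factorial_succ, pow_succ]
  push_cast
  field_simp

theorem hasSum_id_mul_poissonMass (r : ℝ) :
    HasSum (fun n : ℕ => (n : ℝ) * poissonMass r n) r := by
  have h := hasSum_mul_poissonMass r (fun _ => 1) 1 (by simpa using hasSum_poissonMass r)
  simpa using h

theorem hasSum_sq_mul_poissonMass (r : ℝ) :
    HasSum (fun n : ℕ => (n : ℝ) ^ 2 * poissonMass r n) (r ^ 2 + r) := by
  have h := hasSum_mul_poissonMass r (fun n => (n : ℝ)) (r + 1) (by
    simpa [add_mul] using (hasSum_id_mul_poissonMass r).add (hasSum_poissonMass r))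
  convert h using 1
  · ext n; ring
  · ring

theorem pseudoPoissonPMF_zero_eq (l1 l3 : ℝ) (x1 x2 : ℕ) :
    pseudoPoissonPMF l1 0 l3 x1 x2 = poissonMass l1 x1 * poissonMass (l3 * x1) x2 := by
  simp [pseudoPoissonPMF, poissonMass]

/-- When `λ2 = 0` (the Poisson-Poisson distribution), the correlation of the two
coordinates of the bivariate Pseudo-Poisson distribution is `ρ = √(λ3/(1+λ3))`,
which does not depend on `λ1`. -/
theorem pseudoPoisson_correlation_poissonPoisson (l1 l3 : ℝ) (h1 : 0 < l1) (h3 : 0 < l3)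
    (EX1 EX2 EX1sq EX2sq EX1X2 : ℝ)
    (hEX1 : EX1 = ∑' x1 : ℕ, ∑' x2 : ℕ, (x1 : ℝ) * pseudoPoissonPMF l1 0 l3 x1 x2)
    (hEX2 : EX2 = ∑' x1 : ℕ, ∑' x2 : ℕ, (x2 : ℝ) * pseudoPoissonPMF l1 0 l3 x1 x2)
    (hEX1sq : EX1sq = ∑' x1 : ℕ, ∑' x2 : ℕ, (x1 : ℝ) ^ 2 * pseudoPoissonPMF l1 0 l3 x1 x2)
    (hEX2sq : EX2sq = ∑' x1 : ℕ, ∑' x2 : ℕ, (x2 : ℝ) ^ 2 * pseudoPoissonPMF l1 0 l3 x1 x2)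
    (hEX1X2 : EX1X2 =
      ∑' x1 : ℕ, ∑' x2 : ℕ, (x1 : ℝ) * (x2 : ℝ) * pseudoPoissonPMF l1 0 l3 x1 x2) :
    (EX1X2 - EX1 * EX2) / Real.sqrt ((EX1sq - EX1 ^ 2) * (EX2sq - EX2 ^ 2)) =
      Real.sqrt (l3 / (1 + l3)) := by
  have hp := hasSum_poissonMass
  have hm := hasSum_id_mul_poissonMass
  have hs := hasSum_sq_mul_poissonMass
  have e1 : EX1 = l1 := by
    rw [hEX1]
    refine (tsum_congr fun x => ?_).trans (hm l1).tsum_eq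
    simp_rw [pseudoPoissonPMF_zero_eq, ← mul_assoc]
    rw [tsum_mul_left, (hp _).tsum_eq, mul_one]
  have e1s : EX1sq = l1 ^ 2 + l1 := by
    rw [hEX1sq]
    refine (tsum_congr fun x => ?_).trans (hs l1).tsum_eq
    simp_rw [pseudoPoissonPMF_zero_eq, ← mul_assoc]
    rw [tsum_mul_left, (hp _).tsum_eq, mul_one]
  have e2 : EX2 = l3 * l1 := by
    rw [hEX2, ← ((hm l1).mul_left l3).tsum_eq]
    refine tsum_congr fun x => ?_
    simp_rw [pseudoPoissonPMF_zero_eq, mul_left_comm _ (poissonMass l1 x)]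
    rw [tsum_mul_left, (hm _).tsum_eq]
    ring
  have e2s : EX2sq = l3 ^ 2 * (l1 ^ 2 + l1) + l3 * l1 := by
    rw [hEX2sq, ← (((hs l1).mul_left (l3 ^ 2)).add ((hm l1).mul_left l3)).tsum_eq]
    refine tsum_congr fun x => ?_
    simp_rw [pseudoPoissonPMF_zero_eq, mul_left_comm _ (poissonMass l1 x)]
    rw [tsum_mul_left, (hs _).tsum_eq]
    ring
  have e12 : EX1X2 = l3 * (l1 ^ 2 + l1) := by
    rw [hEX1X2, ← ((hs l1).mul_left l3).tsum_eq]
    refine tsum_congr fun x => ?_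
    simp_rw [pseudoPoissonPMF_zero_eq, mul_left_comm _ (poissonMass l1 x), mul_assoc (x : ℝ)]
    rw [tsum_mul_left, tsum_mul_left, (hm _).tsum_eq]
    ring
  have hcov : EX1X2 - EX1 * EX2 = l1 * l3 := by rw [e12, e1, e2]; ring
  have hvar : (EX1sq - EX1 ^ 2) * (EX2sq - EX2 ^ 2) = (l1 * l3) ^ 2 / (l3 / (1 + l3)) := by
    rw [e1s, e1, e2s, e2]
    field_simp
    ring
  rw [hcov, hvar, Real.sqrt_div (by positivity), Real.sqrt_sq (by positivity)]
  have hne : Real.sqrt (l3 / (1 + l3)) ≠ 0 := by positivity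
  field_simp
end

section
/- Let λ1>0, λ2≥0, λ3>0. Then the generalized dispersion index of the bivariate Pseudo-Poisson distribution, GDI(X) = (√μ)ᵀ Σ (√μ) / (μᵀ μ) where μ = (λ1, λ2+λ3·λ1) is the mean vector, √μ is its entrywise square root, and Σ is the covariance matrix with entries Σ11 = λ1, Σ12 = Σ21 = λ1·λ3, Σ22 = λ2 + λ3·λ1 + λ3²·λ1, satisfies GDI(X) = 1 + (2·λ1^{3/2}·λ3·√(λ2+λ3·λ1) + (λ2+λ3·λ1)·λ3²·λ1)/(λ1² + (λ2+λ3·λ1)²) > 1; hence the bivariate Pseudo-Poisson distribution is always over-dispersed. -/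
/-! Writing `m = l2 + l3 * l1`, the identities `√l1 ^ 2 = l1` and `√m ^ 2 = m` turn the quadratic
form `(√μ)ᵀ Σ (√μ)` into `μᵀ μ + 2 * l1 * √l1 * l3 * √m + m * l3 ^ 2 * l1`. Dividing by `μᵀ μ`
gives the formula, since `l1 ^ (3 / 2) = l1 * √l1`, and the excess over `1` is positive because
`l1`, `l3` and `m` are. -/

open Matrix

/-- The generalized (Kokonendji–Puig) dispersion index of the bivariate
Pseudo-Poisson distribution, `GDI(X) = (√μ)ᵀ Σ (√μ) / (μᵀ μ)` where
`μ = (λ1, λ2+λ3·λ1)` is the mean vector and `Σ` the covariance matrix, equals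
`1 + (2·λ1^{3/2}·λ3·√(λ2+λ3·λ1) + (λ2+λ3·λ1)·λ3²·λ1)/(λ1² + (λ2+λ3·λ1)²) > 1`:
the bivariate Pseudo-Poisson distribution is always over-dispersed. -/
theorem pseudoPoisson_GDI (l1 l2 l3 : ℝ) (h1 : 0 < l1) (h2 : 0 ≤ l2) (h3 : 0 < l3)
    (mu sqrtmu : Fin 2 → ℝ) (Sigma : Matrix (Fin 2) (Fin 2) ℝ) (GDI : ℝ)
    (hmu : mu = ![l1, l2 + l3 * l1])
    (hsqrtmu : sqrtmu = ![Real.sqrt l1, Real.sqrt (l2 + l3 * l1)])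
    (hSigma : Sigma = !![l1, l1 * l3; l1 * l3, l2 + l3 * l1 + l3 ^ 2 * l1])
    (hGDI : GDI = (sqrtmu ⬝ᵥ (Sigma *ᵥ sqrtmu)) / (mu ⬝ᵥ mu)) :
    GDI = 1 + (2 * l1 ^ ((3 : ℝ) / 2) * l3 * Real.sqrt (l2 + l3 * l1)
          + (l2 + l3 * l1) * l3 ^ 2 * l1) / (l1 ^ 2 + (l2 + l3 * l1) ^ 2) ∧
      1 < GDI := by
  have hm : 0 < l2 + l3 * l1 := by positivity
  have hpow : l1 ^ ((3 : ℝ) / 2) = l1 * √l1 := by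
    rw [show (3 : ℝ) / 2 = 1 + 1 / 2 by norm_num, Real.rpow_add h1, Real.rpow_one,
      Real.sqrt_eq_rpow]
  have hformula : GDI = 1 + (2 * l1 ^ ((3 : ℝ) / 2) * l3 * √(l2 + l3 * l1)
      + (l2 + l3 * l1) * l3 ^ 2 * l1) / (l1 ^ 2 + (l2 + l3 * l1) ^ 2) := by
    have hden : l1 ^ 2 + (l2 + l3 * l1) ^ 2 ≠ 0 := by positivity
    have hs1 : √l1 ^ 2 = l1 := Real.sq_sqrt h1.le
    have hs2 : √(l2 + l3 * l1) ^ 2 = l2 + l3 * l1 := Real.sq_sqrt hm.le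
    have hnorm : mu ⬝ᵥ mu = l1 ^ 2 + (l2 + l3 * l1) ^ 2 := by
      simp [hmu, dotProduct, Fin.sum_univ_two]
      ring
    have hquad : sqrtmu ⬝ᵥ (Sigma *ᵥ sqrtmu) = l1 ^ 2 + (l2 + l3 * l1) ^ 2
        + (2 * (l1 * √l1) * l3 * √(l2 + l3 * l1) + (l2 + l3 * l1) * l3 ^ 2 * l1) := by
      simp only [hsqrtmu, hSigma, dotProduct, mulVec, Fin.sum_univ_two, of_apply, cons_val_zero,
        cons_val_one, cons_val']
      linear_combination l1 * hs1 + (l2 + l3 * l1 + l3 ^ 2 * l1) * hs2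
    rw [hGDI, hnorm, hquad, hpow, add_div, div_self hden]
  refine ⟨hformula, ?_⟩
  rw [hformula, lt_add_iff_pos_right]
  positivity
end

section
/- Let n ≥ 1 and let (x1i, x2i) ∈ ℕ×ℕ for i = 1,…,n, with sample means M1 = (1/n)∑ x1i > 0 and M2 = (1/n)∑ x2i > 0. Define the sub-model I likelihood L(λ1,λ3) = ∏_{i=1}^n (e^{−λ1} λ1^{x1i}/x1i!) · (e^{−λ3(1+x1i)} (λ3(1+x1i))^{x2i}/x2i!) for λ1,λ3 > 0. Then L attains its maximum over (0,∞)×(0,∞) at (λ1,λ3) = (M1, M2/(1+M1)); i.e., for all λ1>0, λ3>0, L(λ1,λ3) ≤ L(M1, M2/(1+M1)). -/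
/-!
Up to a factor free of the parameters, the likelihood is the product of the two Poisson kernels
`exp (-n l1) * l1 ^ S1` and `exp (-(n + S1) l3) * l3 ^ S2`, where `S1 = ∑ x1 i`, `S2 = ∑ x2 i`
(`subModelILik_eq`). Each kernel `exp (-a l) * l ^ S` is maximal at `l = S / a`, which follows from
`t ≤ exp (t - 1)` at `t = l / (S / a)` raised to the power `S` (`poisson_kernel_le`).
The maximizers are `S1 / n = M1` and `S2 / (n + S1) = M2 / (1 + M1)`.
-/

/-- The likelihood of an i.i.d. sample under sub-model I (`λ2 = λ3`) of the
bivariate Pseudo-Poisson distribution. -/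
noncomputable def subModelILik (n : ℕ) (x1 x2 : Fin n → ℕ) (l1 l3 : ℝ) : ℝ :=
  ∏ i, (Real.exp (-l1) * l1 ^ x1 i / (Nat.factorial (x1 i))) *
    (Real.exp (-(l3 * (1 + (x1 i : ℝ)))) * (l3 * (1 + (x1 i : ℝ))) ^ x2 i /
      (Nat.factorial (x2 i)))

/-- The Poisson kernel `l ↦ exp (-a l) * l ^ S` on `l > 0` is maximal at the `m` with `a * m = S`. -/
lemma poisson_kernel_le (a m l : ℝ) (S : ℕ) (hm : 0 < m) (hl : 0 < l) (hS : (S : ℝ) = a * m) :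
    Real.exp (-(a * l)) * l ^ S ≤ Real.exp (-(a * m)) * m ^ S := by
  have h1 : l / m ≤ Real.exp (l / m - 1) := by
    have := Real.add_one_le_exp (l / m - 1)
    linarith
  have h2 : (l / m) ^ S ≤ Real.exp (a * l - a * m) := by
    calc (l / m) ^ S ≤ Real.exp (l / m - 1) ^ S := by gcongr
      _ = Real.exp (a * l - a * m) := by
        rw [← Real.exp_nat_mul, hS]
        congr 1
        field_simp
  calc Real.exp (-(a * l)) * l ^ S = Real.exp (-(a * l)) * ((l / m) ^ S * m ^ S) := by
        rw [← mul_pow, div_mul_cancel₀ _ hm.ne']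
    _ ≤ Real.exp (-(a * l)) * (Real.exp (a * l - a * m) * m ^ S) := by gcongr
    _ = Real.exp (-(a * m)) * m ^ S := by
        rw [← mul_assoc, ← Real.exp_add]
        congr 2
        ring

/-- The likelihood factors into a parameter-free constant and one Poisson kernel per parameter. -/
lemma subModelILik_eq (n : ℕ) (x1 x2 : Fin n → ℕ) (l1 l3 : ℝ) :
    subModelILik n x1 x2 l1 l3 =
      (∏ i, (1 + (x1 i : ℝ)) ^ x2 i / ((Nat.factorial (x1 i)) * (Nat.factorial (x2 i)))) *
      ((Real.exp (-((n : ℝ) * l1)) * l1 ^ (∑ i, x1 i)) *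
        (Real.exp (-(((n : ℝ) + ∑ i, (x1 i : ℝ)) * l3)) * l3 ^ (∑ i, x2 i))) := by
  have e1 : Real.exp (-((n : ℝ) * l1)) = ∏ _i : Fin n, Real.exp (-l1) := by
    rw [← Real.exp_sum]
    simp
  have e2 : Real.exp (-(((n : ℝ) + ∑ i, (x1 i : ℝ)) * l3))
      = ∏ i, Real.exp (-(l3 * (1 + (x1 i : ℝ)))) := by
    rw [← Real.exp_sum, Finset.sum_neg_distrib, ← Finset.mul_sum, Finset.sum_add_distrib]
    simp [mul_comm]
  rw [e1, e2, ← Finset.prod_pow_eq_pow_sum, ← Finset.prod_pow_eq_pow_sum,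
    ← Finset.prod_mul_distrib, ← Finset.prod_mul_distrib, ← Finset.prod_mul_distrib,
    ← Finset.prod_mul_distrib, subModelILik]
  refine Finset.prod_congr rfl fun i _ => ?_
  rw [mul_pow]
  field_simp

/-- The maximum likelihood estimators for sub-model I (`λ2 = λ3`) of the
bivariate Pseudo-Poisson distribution are `λ̂1 = M1` and `λ̂3 = M2/(1+M1)`:
the likelihood is maximized at `(M1, M2/(1+M1))`. -/
theorem subModelI_mle (n : ℕ) (hn : 1 ≤ n) (x1 x2 : Fin n → ℕ) (M1 M2 : ℝ)
    (hM1 : M1 = (∑ i, (x1 i : ℝ)) / n) (hM2 : M2 = (∑ i, (x2 i : ℝ)) / n)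
    (hM1pos : 0 < M1) (hM2pos : 0 < M2) :
    ∀ l1 l3 : ℝ, 0 < l1 → 0 < l3 →
      subModelILik n x1 x2 l1 l3 ≤ subModelILik n x1 x2 M1 (M2 / (1 + M1)) := by
  intro l1 l3 h1 h3
  have hn0 : (0 : ℝ) < n := by exact_mod_cast hn
  have hS1 : ∑ i, (x1 i : ℝ) = n * M1 := by
    rw [hM1]
    field_simp
  have hS2 : ∑ i, (x2 i : ℝ) = n * M2 := by
    rw [hM2]
    field_simp
  have k1 := poisson_kernel_le n M1 l1 (∑ i, x1 i) hM1pos h1 (by push_cast; exact hS1)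
  have k3 := poisson_kernel_le ((n : ℝ) + ∑ i, (x1 i : ℝ)) (M2 / (1 + M1)) l3 (∑ i, x2 i)
    (by positivity) h3 (by
      push_cast
      rw [hS1, hS2]
      field_simp)
  rw [subModelILik_eq, subModelILik_eq]
  refine mul_le_mul_of_nonneg_left (mul_le_mul k1 k3 (by positivity) (by positivity)) ?_
  exact Finset.prod_nonneg fun i _ => by positivity
end

section
/- Let n ≥ 1 and let (x1i, x2i) ∈ ℕ×ℕ for i = 1,…,n, with sample means M1 = (1/n)∑ x1i > 0 and M2 = (1/n)∑ x2i > 0, and suppose x1i > 0 whenever x2i > 0. Define the sub-model II likelihood L(λ1,λ3) = ∏_{i=1}^n (e^{−λ1} λ1^{x1i}/x1i!) · (e^{−λ3 x1i} (λ3 x1i)^{x2i}/x2i!) for λ1,λ3 > 0 (with convention 0^0=1). Then L attains its maximum over (0,∞)×(0,∞) at (λ1,λ3) = (M1, M2/M1); i.e., for all λ1>0, λ3>0, L(λ1,λ3) ≤ L(M1, M2/M1). -/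
/-!
The likelihood separates: up to a nonnegative factor free of the parameters it equals
`(exp (-(n * l1)) * l1 ^ S1) * (exp (-(S1 * l3)) * l3 ^ S2)`, where `S1 = ∑ x1 i` and
`S2 = ∑ x2 i` (`subModelIILik_eq`). Each bracket has the form `exp (-(a * l)) * l ^ S`, which is
largest where `a * l = S`, by `t ≤ exp (t - 1)` (`exp_neg_mul_pow_le`). This gives
`l1 = S1 / n = M1` and `l3 = S2 / S1 = M2 / M1`.
-/

/-- The likelihood of an i.i.d. sample under sub-model II (`λ2 = 0`, the
Poisson-Poisson distribution) of the bivariate Pseudo-Poisson distribution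
(with the convention `0^0 = 1`). -/
noncomputable def subModelIILik (n : ℕ) (x1 x2 : Fin n → ℕ) (l1 l3 : ℝ) : ℝ :=
  ∏ i, (Real.exp (-l1) * l1 ^ x1 i / (Nat.factorial (x1 i))) *
    (Real.exp (-(l3 * (x1 i : ℝ))) * (l3 * (x1 i : ℝ)) ^ x2 i / (Nat.factorial (x2 i)))

lemma exp_neg_mul_pow_le (S : ℕ) {a l m : ℝ} (hl : 0 < l) (hm : 0 < m) (h : a * m = S) :
    Real.exp (-(a * l)) * l ^ S ≤ Real.exp (-(a * m)) * m ^ S := by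
  have h1 : l / m ≤ Real.exp (l / m - 1) := by
    have := Real.add_one_le_exp (l / m - 1)
    linarith
  have h2 : (l / m) ^ S ≤ Real.exp (a * l - a * m) := by
    calc (l / m) ^ S ≤ Real.exp (l / m - 1) ^ S := pow_le_pow_left₀ (by positivity) h1 S
      _ = Real.exp (a * l - a * m) := by
        rw [← Real.exp_nat_mul, ← h]
        congr 1
        field_simp
  rw [div_pow, div_le_iff₀ (by positivity)] at h2
  calc Real.exp (-(a * l)) * l ^ S
      ≤ Real.exp (-(a * l)) * (Real.exp (a * l - a * m) * m ^ S) := by gcongr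
    _ = Real.exp (-(a * m)) * m ^ S := by
      rw [← mul_assoc, ← Real.exp_add]
      congr 2
      ring

lemma subModelIILik_eq (n : ℕ) (x1 x2 : Fin n → ℕ) (l1 l3 : ℝ) :
    subModelIILik n x1 x2 l1 l3 =
      (Real.exp (-((n : ℝ) * l1)) * l1 ^ (∑ i, x1 i)) *
        (Real.exp (-((∑ i, (x1 i : ℝ)) * l3)) * l3 ^ (∑ i, x2 i)) *
        ∏ i, ((x1 i : ℝ) ^ x2 i / (Nat.factorial (x1 i) * Nat.factorial (x2 i))) := by
  have e1 : Real.exp (-((n : ℝ) * l1)) = ∏ _i : Fin n, Real.exp (-l1) := by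
    rw [← Real.exp_sum]
    simp
  have e2 : Real.exp (-((∑ i, (x1 i : ℝ)) * l3)) = ∏ i, Real.exp (-(l3 * (x1 i : ℝ))) := by
    rw [← Real.exp_sum, Finset.sum_neg_distrib, ← Finset.mul_sum, mul_comm]
  rw [e1, e2, ← Finset.prod_pow_eq_pow_sum, ← Finset.prod_pow_eq_pow_sum]
  simp only [← Finset.prod_mul_distrib]
  unfold subModelIILik
  refine Finset.prod_congr rfl fun i _ => ?_
  rw [mul_pow]
  field_simp

/-- The maximum likelihood estimators for sub-model II (`λ2 = 0`) of the
bivariate Pseudo-Poisson distribution are `λ̂1 = M1` and `λ̂3 = M2/M1`: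
the likelihood is maximized at `(M1, M2/M1)`. -/
theorem subModelII_mle (n : ℕ) (hn : 1 ≤ n) (x1 x2 : Fin n → ℕ) (M1 M2 : ℝ)
    (hM1 : M1 = (∑ i, (x1 i : ℝ)) / n) (hM2 : M2 = (∑ i, (x2 i : ℝ)) / n)
    (hM1pos : 0 < M1) (hM2pos : 0 < M2)
    (hx : ∀ i, 0 < x2 i → 0 < x1 i) :
    ∀ l1 l3 : ℝ, 0 < l1 → 0 < l3 →
      subModelIILik n x1 x2 l1 l3 ≤ subModelIILik n x1 x2 M1 (M2 / M1) := by
  intro l1 l3 h1 h3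
  have hn0 : (n : ℝ) ≠ 0 := by
    have : 0 < n := hn
    positivity
  have hS1 : (n : ℝ) * M1 = ((∑ i, x1 i : ℕ) : ℝ) := by
    rw [hM1]
    push_cast
    field_simp
  have hS2 : (∑ i, (x1 i : ℝ)) * (M2 / M1) = ((∑ i, x2 i : ℕ) : ℝ) := by
    have hs : (∑ i, (x1 i : ℝ)) = n * M1 := by
      rw [hS1]
      push_cast
      rfl
    have hM1ne := hM1pos.ne'
    rw [hs]
    push_cast
    field_simp
    rw [hM2]
    field_simp
  rw [subModelIILik_eq, subModelIILik_eq]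
  have k1 := exp_neg_mul_pow_le _ h1 hM1pos hS1
  have k2 := exp_neg_mul_pow_le _ h3 (div_pos hM2pos hM1pos) hS2
  gcongr
end
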